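/- Let A and B be nontrivial groups, let G = A * B, let X be a finite alphabet with a surjective monoid homomorphism φ : X* → G satisfying φ(x⁻¹) = φ(x)⁻¹ for all x ∈ X (where X = Y_A ⊔ Y_B ⊔ Y_A⁻¹ ⊔ Y_B⁻¹ and the images of Y_A, Y_B generate A, B respectively), let ≤ be a left-invariant linear order on G, and let L ⊆ X* be any language with φ(L) = {g ∈ G : 1 < g}. Then G ⊆ φ(Pref(L)); i.e., every element of G is represented by a prefix of some word in L. -/

import Mathlib

/-- The image in the group `G` of a language `L` over `X` under a monoid
homomorphism `φ : X* → G`. -/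
def langImage {X G : Type} [Monoid G] (φ : FreeMonoid X →* G) (L : Language X) : Set G :=
  (fun w => φ (FreeMonoid.ofList w)) '' L

/-- `Pref L`: the language of all prefixes of words in `L`. -/
def Pref {X : Type} (L : Language X) : Language X :=
  {u | ∃ v, u ++ v ∈ L}

/-! The index of the last syllable of the normal form is unchanged under left multiplication by
letters, as long as the identity is not met. Hence if `h > 1` is such that the last syllables of
`g` and of `h⁻¹ g` lie in different factors, then reading a word for `h` from right to left,
starting at `h⁻¹ g`, must pass through `1`; this splits the word into `u v` with `φ u = g`.
Writing `h = g w`, it remains to find `w > g⁻¹` such that `w⁻¹` ends in a prescribed nontrivial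
factor. If such `w` were bounded above by `c`, then for a letter `a ≠ 1` of this factor every other
element would be carried below `c` by left translation by `a⁻¹`, and the whole group would be
bounded above. -/

open Monoid (Coprod CoprodI)
open Monoid.CoprodI (of Word)

section LastIdx

variable {ι : Type*} {M : ι → Type*} [∀ i, Monoid (M i)] {i : ι}

open Classical in
/-- The index of the factor containing the last syllable of the normal form of an element of a
free product, or `none` for the identity. It is the counterpart of `Monoid.CoprodI.Word.fstIdx`,
taken on elements instead of reduced words. -/
noncomputable def lastIdx (g : CoprodI M) : Option ι :=
  (Word.equiv g).toList.getLast?.map Sigma.fst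

theorem word_prod_bijective : Function.Bijective (Word.prod : Word M → CoprodI M) := by
  classical
  exact Word.equiv.symm.bijective

theorem lastIdx_prod (w : Word M) : lastIdx w.prod = w.toList.getLast?.map Sigma.fst := by
  classical
  have h : Word.equiv w.prod = w := Word.equiv.apply_symm_apply w
  rw [lastIdx, h]

theorem lastIdx_eq_none {g : CoprodI M} : lastIdx g = none ↔ g = 1 := by
  obtain ⟨w, rfl⟩ := word_prod_bijective.surjective g
  rw [lastIdx_prod, Option.map_eq_none_iff, List.getLast?_eq_none_iff, ← Word.prod_empty,
    word_prod_bijective.injective.eq_iff, Word.ext_iff, Word.empty_toList]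

theorem exists_eq_of_mul_prod (i : ι) (g : CoprodI M) :
    ∃ (m : M i) (w : Word M), w.fstIdx ≠ some i ∧ g = of m * w.prod := by
  classical
  let p := Word.equivPair i (Word.equiv g)
  refine ⟨p.head, p.tail, p.fstIdx_ne, ?_⟩
  rw [← Word.prod_rcons, ← Word.equivPair_symm, Equiv.symm_apply_apply]
  exact (Word.equiv.symm_apply_apply g).symm

theorem lastIdx_of_mul_prod {m : M i} {w : Word M} (hw : w.fstIdx ≠ some i)
    (h : of m * w.prod ≠ 1) : lastIdx (of m * w.prod) = some ((lastIdx w.prod).getD i) := by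
  rcases eq_or_ne m 1 with rfl | hm
  · rw [map_one, one_mul] at h ⊢
    obtain ⟨j, hj⟩ := Option.ne_none_iff_exists'.mp (mt lastIdx_eq_none.mp h)
    rw [hj, Option.getD_some]
  · rw [← Word.prod_cons i m w hm hw, lastIdx_prod, lastIdx_prod, Word.cons_toList,
      List.getLast?_cons, Option.map_some, Option.getD_map Sigma.fst ⟨i, m⟩]

theorem lastIdx_of_mul {m : M i} {g : CoprodI M} (hg : g ≠ 1) (h : of m * g ≠ 1) :
    lastIdx (of m * g) = lastIdx g := by
  obtain ⟨m', w, hw, rfl⟩ := exists_eq_of_mul_prod i g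
  rw [← mul_assoc, ← map_mul] at h ⊢
  rw [lastIdx_of_mul_prod hw h, lastIdx_of_mul_prod hw hg]

theorem lastIdx_mul_of {m : M i} {g : CoprodI M} (hm : m ≠ 1) (hg : lastIdx g ≠ some i) :
    lastIdx (g * of m) = some i := by
  obtain ⟨w, rfl⟩ := word_prod_bijective.surjective g
  rw [lastIdx_prod] at hg
  let w' : Word M :=
    { toList := w.toList ++ [⟨i, m⟩]
      ne_one := by simpa [or_imp, forall_and, hm] using w.ne_one
      chain_ne := by
        refine w.chain_ne.append (List.isChain_singleton _) ?_
        rintro x hx _ ⟨⟩ rfl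
        exact hg (congrArg (Option.map Sigma.fst) hx) }
  have hw' : w'.prod = w.prod * of m := by simp [w', Word.prod]
  rw [← hw', lastIdx_prod]
  simp [w']

theorem exists_suffix_mul_eq_one {X : Type*} (φ : FreeMonoid X →* CoprodI M)
    (hφ : ∀ x, ∃ i, ∃ m : M i, φ (FreeMonoid.of x) = of m) {g : CoprodI M} (l : List X)
    (hl : lastIdx (φ (FreeMonoid.ofList l) * g) ≠ lastIdx g) :
    ∃ u v, l = u ++ v ∧ φ (FreeMonoid.ofList v) * g = 1 := by
  induction l with
  | nil => simp at hl
  | cons x l ih =>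
    by_cases hstep : lastIdx (φ (FreeMonoid.ofList l) * g) = lastIdx g
    · obtain ⟨i, m, hm⟩ := hφ x
      rw [FreeMonoid.ofList_cons, map_mul, hm, mul_assoc, ← hstep] at hl
      by_cases h : φ (FreeMonoid.ofList l) * g = 1
      · exact ⟨[x], l, rfl, h⟩
      · refine ⟨[], x :: l, rfl, ?_⟩
        rw [FreeMonoid.ofList_cons, map_mul, hm, mul_assoc]
        exact of_not_not fun h' ↦ hl (lastIdx_of_mul h h')
    · obtain ⟨u, v, rfl, hv⟩ := ih hstep
      exact ⟨x :: u, v, rfl, hv⟩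

end LastIdx

theorem noMaxOrder_of_mulLeftMono {G : Type*} [Group G] [Nontrivial G] [LinearOrder G]
    [MulLeftMono G] : NoMaxOrder G where
  exists_gt c := by
    obtain ⟨a, ha⟩ := exists_ne (1 : G)
    rcases ha.lt_or_gt with h | h
    · exact ⟨c * a⁻¹, lt_mul_of_one_lt_right' c (Left.one_lt_inv_iff.mpr h)⟩
    · exact ⟨c * a, lt_mul_of_one_lt_right' c h⟩

theorem exists_gt_lastIdx_inv_eq {ι : Type*} {M : ι → Type*} [∀ i, Monoid (M i)] {G : Type*}
    [Group G] [LinearOrder G] [MulLeftMono G] (e : G ≃* CoprodI M) (i : ι) [Nontrivial (M i)]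
    (c : G) : ∃ w, c < w ∧ lastIdx (e w⁻¹) = some i := by
  have : Nontrivial G :=
    (e.symm.injective.comp (Monoid.CoprodI.of_injective i)).nontrivial
  have := noMaxOrder_of_mulLeftMono (G := G)
  by_contra! hbdd
  obtain ⟨m, hm⟩ := exists_ne (1 : M i)
  let a : G := e.symm (of m)
  obtain ⟨d, hd⟩ := exists_gt (max c (a * c))
  obtain ⟨hcd, hacd⟩ := max_lt_iff.mp hd
  refine hbdd (a⁻¹ * d) (lt_inv_mul_iff_mul_lt.mpr hacd) ?_
  rw [mul_inv_rev, inv_inv, map_mul, e.apply_symm_apply]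
  exact lastIdx_mul_of hm (hbdd d hcd)

theorem group_contained_in_image_of_prefixes_general {ι : Type*} {M : ι → Type*}
    [∀ i, Monoid (M i)] {X G : Type} [Group G] [LinearOrder G] [MulLeftMono G]
    (e : G ≃* CoprodI M) {i j : ι} (hij : i ≠ j) [Nontrivial (M i)] [Nontrivial (M j)]
    (φ : FreeMonoid X →* G) (hφ : ∀ x, ∃ k, ∃ m : M k, e (φ (FreeMonoid.of x)) = of m)
    {L : Language X} (hL : Set.Ioi 1 ⊆ langImage φ L) (g : G) : g ∈ langImage φ (Pref L) := by
  obtain ⟨w, hgw, hw⟩ : ∃ w, g⁻¹ < w ∧ lastIdx (e g) ≠ lastIdx (e w⁻¹) := by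
    by_cases hg : lastIdx (e g) = some i
    · obtain ⟨w, hgw, hw⟩ := exists_gt_lastIdx_inv_eq e j g⁻¹
      exact ⟨w, hgw, by simpa [hg, hw] using hij⟩
    · obtain ⟨w, hgw, hw⟩ := exists_gt_lastIdx_inv_eq e i g⁻¹
      exact ⟨w, hgw, hw ▸ hg⟩
  obtain ⟨l, hlL, hl : φ (FreeMonoid.ofList l) = g * w⟩ := hL (inv_lt_iff_one_lt_mul'.mp hgw)
  have hne : lastIdx (e (φ (FreeMonoid.ofList l)) * e w⁻¹) ≠ lastIdx (e w⁻¹) := by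
    rwa [← map_mul, hl, mul_inv_cancel_right]
  obtain ⟨u, v, rfl, hv⟩ := exists_suffix_mul_eq_one (e.toMonoidHom.comp φ) hφ l hne
  have hvw : e (φ (FreeMonoid.ofList v) * w⁻¹) = 1 := (map_mul e _ _).trans hv
  rw [e.map_eq_one_iff, mul_inv_eq_one] at hvw
  refine ⟨u, ⟨v, hlL⟩, ?_⟩
  rwa [FreeMonoid.ofList_append, map_mul, hvw, mul_left_inj] at hl

universe u

section Coprod

variable {A B : Type u} [Monoid A] [Monoid B]

/-- The family with members `A` and `B`, indexed by `Bool`, which presents the binary free product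
`A ∗ B` as an indexed one. -/
abbrev BinaryFamily (A B : Type u) : Bool → Type u :=
  Bool.rec A B

instance : ∀ b, Monoid (BinaryFamily A B b) :=
  Bool.rec ‹Monoid A› ‹Monoid B›

instance [Nontrivial A] [Nontrivial B] : ∀ b, Nontrivial (BinaryFamily A B b) :=
  Bool.rec ‹Nontrivial A› ‹Nontrivial B›

/-- The binary free product `A ∗ B` as the free product of a family indexed by `Bool`. -/
def coprodEquivCoprodI : Coprod A B ≃* CoprodI (BinaryFamily A B) :=
  MonoidHom.toMulEquiv
    (Coprod.lift (of (M := BinaryFamily A B) (i := false)) (of (M := BinaryFamily A B) (i := true)))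
    (CoprodI.lift (Bool.rec Coprod.inl Coprod.inr))
    (by ext <;> simp) (by ext (_ | _) <;> simp)

theorem coprodEquivCoprodI_inl (a : A) :
    coprodEquivCoprodI (Coprod.inl a : Coprod A B) = of (M := BinaryFamily A B) (i := false) a :=
  rfl

theorem coprodEquivCoprodI_inr (b : B) :
    coprodEquivCoprodI (Coprod.inr b : Coprod A B) = of (M := BinaryFamily A B) (i := true) b :=
  rfl

end Coprod

theorem coprodEquivCoprodI_letter_mem_factor {A B : Type u} {YA YB : Type*} [Group A]
    [Group B] {genA : YA → A} {genB : YB → B} {φ : FreeMonoid ((YA ⊕ YB) × Bool) →* Coprod A B}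
    (hφA : ∀ y, φ (FreeMonoid.of (Sum.inl y, true)) = Coprod.inl (genA y))
    (hφB : ∀ y, φ (FreeMonoid.of (Sum.inr y, true)) = Coprod.inr (genB y))
    (hφinv : ∀ s b, φ (FreeMonoid.of (s, !b)) = (φ (FreeMonoid.of (s, b)))⁻¹)
    (x : (YA ⊕ YB) × Bool) :
    ∃ k, ∃ m : BinaryFamily A B k, coprodEquivCoprodI (φ (FreeMonoid.of x)) = of m := by
  suffices h : (∃ a, φ (FreeMonoid.of x) = Coprod.inl a) ∨
      ∃ b, φ (FreeMonoid.of x) = Coprod.inr b by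
    rcases h with ⟨a, ha⟩ | ⟨b, hb⟩
    · exact ⟨false, a, by rw [ha, coprodEquivCoprodI_inl]⟩
    · exact ⟨true, b, by rw [hb, coprodEquivCoprodI_inr]⟩
  match x with
  | (.inl y, true) => exact .inl ⟨_, hφA y⟩
  | (.inr y, true) => exact .inr ⟨_, hφB y⟩
  | (.inl y, false) => exact .inl ⟨(genA y)⁻¹, (hφinv _ true).trans (by rw [hφA, map_inv])⟩
  | (.inr y, false) => exact .inr ⟨(genB y)⁻¹, (hφinv _ true).trans (by rw [hφB, map_inv])⟩

/-- Let `G = A ∗ B` be a free product of nontrivial groups, with a group alphabet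
`X = Y_A ⊔ Y_B ⊔ Y_A⁻¹ ⊔ Y_B⁻¹` (realized as `(Y_A ⊕ Y_B) × Bool`) mapping onto
generators of `A` and `B`, and let `≤` be a left-invariant linear order on `G`.
If the language `L` represents the positive cone, then every element of `G` is
represented by a prefix of a word in `L`: `G ⊆ φ(Pref L)`. -/
theorem group_contained_in_image_of_prefixes
    {A B : Type} [Group A] [Group B] [Nontrivial A] [Nontrivial B]
    {YA YB : Type} [Fintype YA] [Fintype YB]
    (genA : YA → A) (genB : YB → B)
    (hgenA : Subgroup.closure (Set.range genA) = ⊤)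
    (hgenB : Subgroup.closure (Set.range genB) = ⊤)
    (φ : FreeMonoid ((YA ⊕ YB) × Bool) →* Monoid.Coprod A B)
    (hφ : Function.Surjective φ)
    (hφA : ∀ y : YA, φ (FreeMonoid.of (Sum.inl y, true)) = Monoid.Coprod.inl (genA y))
    (hφB : ∀ y : YB, φ (FreeMonoid.of (Sum.inr y, true)) = Monoid.Coprod.inr (genB y))
    (hφinv : ∀ (s : YA ⊕ YB) (b : Bool),
      φ (FreeMonoid.of (s, !b)) = (φ (FreeMonoid.of (s, b)))⁻¹)
    (lin : LinearOrder (Monoid.Coprod A B))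
    (hlin : ∀ h g g' : Monoid.Coprod A B, lin.le g g' → lin.le (h * g) (h * g'))
    (L : Language ((YA ⊕ YB) × Bool))
    (hL : langImage φ L = {g : Monoid.Coprod A B | lin.lt 1 g}) :
    ∀ g : Monoid.Coprod A B, g ∈ langImage φ (Pref L) := by
  have : MulLeftMono (Coprod A B) := ⟨fun h _ _ ↦ hlin h _ _⟩
  exact group_contained_in_image_of_prefixes_general coprodEquivCoprodI Bool.false_ne_true φ
    (coprodEquivCoprodI_letter_mem_factor hφA hφB hφinv) hL.ge
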